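/- Let α ∈ (1,2) and let ψ : ℝ → ℝ be a three times continuously differentiable, compactly supported function satisfying the vanishing moment conditions ∫_ℝ s^m ψ(s) ds = 0 for m ∈ {0,1,2,3}. Define Ψ : ℝ × (1/α, 1) → ℝ by Ψ(x,v) := ∫_ℝ (x−s)_+^{v − 1/α} ψ(s) ds. Then for every p ∈ {0,1,2,3} and every q ∈ ℕ, the mixed partial derivative ∂_x^p ∂_v^q Ψ exists and is continuous on ℝ × (1/α, 1), and for all real numbers a, b with 1/α < a < b < 1, sup_{(x,v) ∈ ℝ × [a,b]} (3 + |x|)² | (∂_x^p ∂_v^q Ψ)(x,v) | < ∞. -/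

import Mathlib

open Set MeasureTheory

/-- The truncated power function `(x)_+^κ`, equal to `x^κ` if `x > 0` and `0` otherwise. -/
noncomputable def posPow (x κ : ℝ) : ℝ := if 0 < x then x ^ κ else 0

/-- The fractional primitive `Ψ(x,v) = ∫ (x-s)_+^{v - 1/α} ψ(s) ds` of the wavelet `ψ`. -/
noncomputable def fracPrimitive (α : ℝ) (ψ : ℝ → ℝ) (x v : ℝ) : ℝ :=
  ∫ s : ℝ, posPow (x - s) (v - 1 / α) * ψ s

/-!
Differentiating `Ψ(x, v) = ∫ (x - s)_+^{v - 1/α} ψ(s) ds` in `v` puts powers of `log (x - s)` into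
the kernel, while differentiating in `x` moves derivatives onto `ψ`, so that
`∂ₓ^p ∂ᵥ^q Ψ(x, v) = ∫ (x - s)_+^κ log^q (x - s) ψ⁽ᵖ⁾(s) ds` with `κ = v - 1/α`. This vanishes to
the left of the support of `ψ` and is continuous in `(x, v)`. To the right of the support the kernel
is smooth: if the moments of `ψ` of order `< N` vanish, those of `ψ⁽ᵖ⁾` of order `< N + p` do, and
subtracting from the kernel its Taylor polynomial of degree `N + p - 1` at `x` leaves an integrand
controlled by `∂ᵤ^(N+p) (u^κ log^q u) = O(u^(κ - N - p + ε))`.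
-/

open Filter Topology ContinuousLinearMap
open scoped Convolution Nat

section Moments

/-- The moments of order `0, …, N - 1` of `g` vanish. Moments are Bochner integrals, hence `0` by
convention where `s ^ m * g s` is not integrable. -/
def HasVanishingMoments (N : ℕ) (g : ℝ → ℝ) : Prop :=
  ∀ m < N, ∫ s : ℝ, s ^ m * g s = 0

variable {g : ℝ → ℝ} {N : ℕ}

lemma integrable_mul_of_hasCompactSupport {h : ℝ → ℝ} (hh : Continuous h) (hg : Continuous g)
    (hs : HasCompactSupport g) : Integrable (h * g) :=
  (hh.mul hg).integrable_of_hasCompactSupport hs.mul_left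

lemma hasVanishingMoments_deriv (hmom : HasVanishingMoments N g) (hg : ContDiff ℝ 1 g)
    (hs : HasCompactSupport g) : HasVanishingMoments (N + 1) (deriv g) := by
  intro m hm
  have parts : ∫ s : ℝ, s ^ m * deriv g s = -∫ s : ℝ, (m * s ^ (m - 1)) * g s :=
    integral_mul_deriv_eq_deriv_mul_of_integrable
      (fun s _ => hasDerivAt_pow m s)
      (fun s _ => (hg.differentiable one_ne_zero s).hasDerivAt)
      (integrable_mul_of_hasCompactSupport (by fun_prop) (hg.continuous_deriv le_rfl) hs.deriv)
      (integrable_mul_of_hasCompactSupport (by fun_prop) hg.continuous hs)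
      (integrable_mul_of_hasCompactSupport (by fun_prop) hg.continuous hs)
  rw [parts]
  simp only [mul_assoc, integral_const_mul]
  rcases m with _ | m
  · simp
  · simp [hmom m (by lia)]

lemma hasCompactSupport_iteratedDeriv (hs : HasCompactSupport g) (p : ℕ) :
    HasCompactSupport (iteratedDeriv p g) :=
  (hs.iteratedFDeriv (𝕜 := ℝ) p).comp_left
    (g := fun L : ContinuousMultilinearMap ℝ (fun _ : Fin p => ℝ) ℝ => L fun _ => 1) rfl

lemma contDiff_one_iteratedDeriv {n p : ℕ} (hg : ContDiff ℝ n g) (hp : p < n) :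
    ContDiff ℝ 1 (iteratedDeriv p g) := by
  rw [iteratedDeriv_eq_iterate]
  exact ContDiff.iterate_deriv' 1 p (hg.of_le (mod_cast (by lia : 1 + p ≤ n)))

lemma hasVanishingMoments_iteratedDeriv {n p : ℕ} (hmom : HasVanishingMoments N g)
    (hg : ContDiff ℝ n g) (hs : HasCompactSupport g) (hp : p ≤ n) :
    HasVanishingMoments (N + p) (iteratedDeriv p g) := by
  induction p with
  | zero => simpa using hmom
  | succ p ih =>
    rw [iteratedDeriv_succ]
    exact hasVanishingMoments_deriv (ih (by lia)) (contDiff_one_iteratedDeriv hg hp)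
      (hasCompactSupport_iteratedDeriv hs p)

lemma HasVanishingMoments.integral_sum_mul_eq_zero (hmom : HasVanishingMoments N g)
    (hg : Continuous g) (hs : HasCompactSupport g) (a : ℕ → ℝ) :
    ∫ s, (∑ k ∈ Finset.range N, a k * s ^ k) * g s = 0 := by
  have hint : ∀ k, Integrable fun s => a k * (s ^ k * g s) := fun k =>
    (integrable_mul_of_hasCompactSupport (continuous_pow k) hg hs).const_mul (a k)
  simp only [Finset.sum_mul, mul_assoc]
  rw [integral_finsetSum _ fun k _ => hint k]
  refine Finset.sum_eq_zero fun k hk => ?_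
  rw [integral_const_mul, hmom k (Finset.mem_range.1 hk), mul_zero]

lemma abs_sub_taylor_sum_le {f : ℝ → ℝ} {c y M : ℝ}
    (hf : ∀ z ∈ uIcc c y, ContDiffAt ℝ N f z)
    (hM : ∀ z ∈ uIcc c y, |iteratedDeriv N f z| ≤ M) :
    |f y - ∑ k ∈ Finset.range N, (iteratedDeriv k f c / k !) * (y - c) ^ k| ≤
      M * |y - c| ^ N / N ! := by
  rcases N with _ | n
  · simpa using hM y right_mem_uIcc
  rcases eq_or_ne c y with rfl | hcy
  · simp [Finset.sum_range_succ']
  obtain ⟨z, hz, hlagrange⟩ := taylor_mean_remainder_lagrange_iteratedDeriv hcy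
    fun z hz => (hf z hz).contDiffWithinAt
  have htaylor : taylorWithinEval f n (uIcc c y) c y =
      ∑ k ∈ Finset.range (n + 1), (iteratedDeriv k f c / k !) * (y - c) ^ k := by
    rw [taylor_within_apply]
    refine Finset.sum_congr rfl fun k hk => ?_
    have hk' : (k : WithTop ℕ∞) ≤ (n + 1 : ℕ) := mod_cast (Finset.mem_range.1 hk).le
    rw [iteratedDerivWithin_eq_iteratedDeriv (uniqueDiffOn_uIcc hcy)
      ((hf c left_mem_uIcc).of_le hk') left_mem_uIcc, smul_eq_mul]
    ring
  rw [← htaylor, hlagrange, abs_div, abs_mul, abs_pow, Nat.abs_cast]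
  gcongr
  exact hM z (uIoo_subset_uIcc_self hz)

lemma HasVanishingMoments.abs_integral_mul_le (hmom : HasVanishingMoments N g)
    (hg : Continuous g) (hs : HasCompactSupport g) {R : ℝ} (hR : 0 ≤ R)
    (hsub : tsupport g ⊆ Icc (-R) R) {f : ℝ → ℝ} {M : ℝ}
    (hf : ∀ s ∈ Icc (-R) R, ContDiffAt ℝ N f s)
    (hM : ∀ s ∈ Icc (-R) R, |iteratedDeriv N f s| ≤ M)
    (hfg : Integrable fun s => f s * g s) :
    |∫ s, f s * g s| ≤ M * (R ^ N / N ! * ∫ s, |g s|) := by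
  have h0 : (0 : ℝ) ∈ Icc (-R) R := by simpa using hR
  have hM0 : 0 ≤ M := (abs_nonneg _).trans (hM 0 h0)
  let P : ℝ → ℝ := fun s => ∑ k ∈ Finset.range N, (iteratedDeriv k f 0 / k !) * s ^ k
  have hPg : Integrable fun s => P s * g s :=
    integrable_mul_of_hasCompactSupport (by fun_prop) hg hs
  have hsub_taylor : ∫ s, f s * g s = ∫ s, (f s * g s - P s * g s) := by
    rw [integral_sub hfg hPg, hmom.integral_sum_mul_eq_zero hg hs, sub_zero]
  rw [hsub_taylor, ← mul_assoc, ← integral_const_mul, ← Real.norm_eq_abs]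
  refine norm_integral_le_of_norm_le
    ((hg.integrable_of_hasCompactSupport hs).abs.const_mul _) (ae_of_all _ fun s => ?_)
  by_cases hsg : s ∈ tsupport g
  · have huIcc : uIcc 0 s ⊆ Icc (-R) R := uIcc_subset_Icc h0 (hsub hsg)
    have hremainder : |f s - P s| ≤ M * |s| ^ N / N ! := by
      simpa using abs_sub_taylor_sum_le (fun z hz => hf z (huIcc hz)) fun z hz => hM z (huIcc hz)
    rw [← sub_mul, norm_mul, Real.norm_eq_abs, Real.norm_eq_abs]
    gcongr
    calc |f s - P s| ≤ M * |s| ^ N / N ! := hremainder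
      _ ≤ M * (R ^ N / N !) := by
        rw [mul_div_assoc]
        gcongr
        exact abs_le.2 (hsub hsg)
  · simp [image_eq_zero_of_notMem_tsupport hsg]

end Moments

section Kernel

/-- The kernel `u_+^κ log^q u`, the `q`-th derivative of the truncated power `u_+^κ` in `κ`. -/
noncomputable def posPowLog (q : ℕ) (κ u : ℝ) : ℝ := posPow u κ * Real.log u ^ q

variable {q : ℕ} {κ u : ℝ}

lemma posPowLog_of_nonpos (hu : u ≤ 0) : posPowLog q κ u = 0 := by
  simp [posPowLog, posPow, hu.not_gt]

lemma posPowLog_of_pos (hu : 0 < u) : posPowLog q κ u = u ^ κ * Real.log u ^ q := by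
  simp [posPowLog, posPow, hu]

lemma hasDerivAt_posPowLog_exponent (q : ℕ) (κ u : ℝ) :
    HasDerivAt (fun κ' => posPowLog q κ' u) (posPowLog (q + 1) κ u) κ := by
  rcases le_or_gt u 0 with hu | hu
  · simpa only [posPowLog_of_nonpos hu] using hasDerivAt_const κ (0 : ℝ)
  · simp only [posPowLog_of_pos hu]
    exact ((Real.hasStrictDerivAt_const_rpow hu κ).hasDerivAt.mul_const _).congr_deriv (by ring)

lemma continuous_posPowLog_exponent (q : ℕ) (u : ℝ) : Continuous fun κ => posPowLog q κ u :=
  continuous_iff_continuousAt.2 fun κ => (hasDerivAt_posPowLog_exponent q κ u).continuousAt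

lemma posPowLog_eventuallyEq (hu : 0 < u) :
    posPowLog q κ =ᶠ[𝓝 u] fun u' => u' ^ κ * Real.log u' ^ q :=
  mem_of_superset (Ioi_mem_nhds hu) fun _ hu' => posPowLog_of_pos hu'

lemma contDiffAt_posPowLog {n : WithTop ℕ∞} (hu : 0 < u) : ContDiffAt ℝ n (posPowLog q κ) u :=
  ((Real.contDiffAt_rpow_const_of_ne hu.ne').mul
    ((Real.contDiffAt_log.2 hu.ne').pow q)).congr_of_eventuallyEq (posPowLog_eventuallyEq hu)

lemma deriv_posPowLog (hu : 0 < u) :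
    deriv (posPowLog q κ) u = κ * posPowLog q (κ - 1) u + q * posPowLog (q - 1) (κ - 1) u := by
  have hderiv := (Real.hasDerivAt_rpow_const (p := κ) (Or.inl hu.ne')).mul
    ((Real.hasDerivAt_log hu.ne').pow q)
  rw [(posPowLog_eventuallyEq hu).deriv_eq]
  refine hderiv.deriv.trans ?_
  simp only [posPowLog_of_pos hu, Pi.pow_apply, Real.rpow_sub_one hu.ne']
  field_simp

lemma iteratedDeriv_succ_posPowLog (n : ℕ) (hu : 0 < u) :
    iteratedDeriv (n + 1) (posPowLog q κ) u =
      κ * iteratedDeriv n (posPowLog q (κ - 1)) u +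
        q * iteratedDeriv n (posPowLog (q - 1) (κ - 1)) u := by
  have hderiv : deriv (posPowLog q κ) =ᶠ[𝓝 u]
      fun u' => κ * posPowLog q (κ - 1) u' + q * posPowLog (q - 1) (κ - 1) u' :=
    mem_of_superset (Ioi_mem_nhds hu) fun _ hu' => deriv_posPowLog hu'
  rw [iteratedDeriv_succ', hderiv.iteratedDeriv_eq,
    iteratedDeriv_fun_add (contDiffAt_const.mul (contDiffAt_posPowLog hu))
      (contDiffAt_const.mul (contDiffAt_posPowLog hu)),
    iteratedDeriv_const_mul_field, iteratedDeriv_const_mul_field]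

lemma abs_log_pow_le {ε : ℝ} (hε : 0 < ε) (hu : 0 < u) (q : ℕ) :
    |Real.log u| ^ q ≤ q ! / ε ^ q * (u ^ ε + u ^ (-ε)) := by
  have hexp : (|Real.log u| * ε) ^ q / q ! ≤ u ^ ε + u ^ (-ε) :=
    calc (|Real.log u| * ε) ^ q / q ! ≤ Real.exp |Real.log u * ε| := by
          rw [abs_mul, abs_of_pos hε]
          exact Real.pow_div_factorial_le_exp _ (by positivity) q
      _ ≤ Real.exp (Real.log u * ε) + Real.exp (-(Real.log u * ε)) := Real.exp_abs_le _
      _ = u ^ ε + u ^ (-ε) := by rw [Real.rpow_def_of_pos hu, Real.rpow_def_of_pos hu, mul_neg]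
  calc |Real.log u| ^ q = q ! / ε ^ q * ((|Real.log u| * ε) ^ q / q !) := by
        rw [mul_pow]; field_simp
    _ ≤ q ! / ε ^ q * (u ^ ε + u ^ (-ε)) := by gcongr

lemma exists_abs_iteratedDeriv_posPowLog_le (n q : ℕ) (a : ℝ) {b d : ℝ} (hd : b < d + n) :
    ∃ C, ∀ κ ∈ Icc a b, ∀ u, 1 ≤ u → |iteratedDeriv n (posPowLog q κ) u| ≤ C * u ^ d := by
  induction n generalizing q a b with
  | zero =>
    have hε : 0 < d - b := by simpa using hd
    refine ⟨q ! / (d - b) ^ q * 2, fun κ hκ u hu => ?_⟩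
    have hu0 : 0 < u := by linarith
    have hpow : u ^ (d - b) + u ^ (-(d - b)) ≤ 2 * u ^ (d - b) := by
      have := Real.rpow_le_rpow_of_exponent_le hu (show -(d - b) ≤ d - b by linarith)
      linarith
    rw [iteratedDeriv_zero, posPowLog_of_pos hu0, abs_mul, abs_pow, abs_of_pos (by positivity)]
    calc u ^ κ * |Real.log u| ^ q
        ≤ u ^ b * (q ! / (d - b) ^ q * (2 * u ^ (d - b))) := by
          gcongr
          · exact hκ.2
          · exact (abs_log_pow_le hε hu0 q).trans (by gcongr)
      _ = q ! / (d - b) ^ q * 2 * (u ^ b * u ^ (d - b)) := by ring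
      _ = q ! / (d - b) ^ q * 2 * u ^ d := by rw [← Real.rpow_add hu0, add_sub_cancel]
  | succ n ih =>
    push_cast at hd
    obtain ⟨C₁, hC₁⟩ := ih q (a - 1) (b := b - 1) (by linarith)
    obtain ⟨C₂, hC₂⟩ := ih (q - 1) (a - 1) (b := b - 1) (by linarith)
    refine ⟨max |a| |b| * C₁ + q * C₂, fun κ hκ u hu => ?_⟩
    have hκ' : κ - 1 ∈ Icc (a - 1) (b - 1) := ⟨by linarith [hκ.1], by linarith [hκ.2]⟩
    rw [iteratedDeriv_succ_posPowLog n (by linarith)]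
    calc _ ≤ |κ| * |iteratedDeriv n (posPowLog q (κ - 1)) u| +
            q * |iteratedDeriv n (posPowLog (q - 1) (κ - 1)) u| := by
          exact (abs_add_le _ _).trans_eq (by rw [abs_mul, abs_mul, Nat.abs_cast])
      _ ≤ max |a| |b| * (C₁ * u ^ d) + q * (C₂ * u ^ d) := by
          gcongr
          · exact abs_le_max_abs_abs hκ.1 hκ.2
          · exact hC₁ _ hκ' u hu
          · exact hC₂ _ hκ' u hu
      _ = (max |a| |b| * C₁ + q * C₂) * u ^ d := by ring

lemma exists_abs_iteratedDeriv_posPowLog_sub_le (n q : ℕ) (a : ℝ) {b r : ℝ} (hr : 0 ≤ r)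
    (hbr : b + r < n) :
    ∃ C, ∀ κ ∈ Icc a b, ∀ x s, 3 ≤ x → 2 * s + 3 ≤ x →
      |iteratedDeriv n (fun s => posPowLog q κ (x - s)) s| ≤ C / (3 + |x|) ^ r := by
  obtain ⟨C, hC⟩ := exists_abs_iteratedDeriv_posPowLog_le n q a (b := b) (d := -r) (by linarith)
  refine ⟨4 ^ r * C, fun κ hκ x s hx hsx => ?_⟩
  have hxs : 1 ≤ x - s := by linarith
  have hxs0 : 0 < x - s := by linarith
  have hC0 : 0 ≤ C := by simpa using (abs_nonneg _).trans (hC κ hκ 1 le_rfl)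
  have hweight : (3 + |x|) ^ r ≤ 4 ^ r * (x - s) ^ r := by
    rw [← Real.mul_rpow (by norm_num) hxs0.le]
    gcongr
    rw [abs_of_nonneg (by linarith)]
    linarith
  rw [iteratedDeriv_comp_const_sub, le_div_iff₀ (by positivity)]
  calc |(-1 : ℝ) ^ n • iteratedDeriv n (posPowLog q κ) (x - s)| * (3 + |x|) ^ r
      = |iteratedDeriv n (posPowLog q κ) (x - s)| * (3 + |x|) ^ r := by simp [abs_mul]
    _ ≤ C * (x - s) ^ (-r) * (4 ^ r * (x - s) ^ r) := by
        gcongr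
        exact hC κ hκ (x - s) hxs
    _ = 4 ^ r * C := by
        rw [Real.rpow_neg hxs0.le]
        field_simp

lemma posPow_eq_indicator (κ : ℝ) : (posPow · κ) = (Ioi 0).indicator (· ^ κ) := by
  ext u
  simp [posPow, indicator]

lemma locallyIntegrable_posPow (hκ : -1 < κ) : LocallyIntegrable (posPow · κ) := by
  rw [posPow_eq_indicator]
  refine LocallyIntegrable.indicator (fun x => ?_) measurableSet_Ioi
  refine ⟨Ioc (x - 1) (x + 1), Ioc_mem_nhds (by linarith) (by linarith), ?_⟩
  exact (intervalIntegral.intervalIntegrable_rpow' hκ).1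

lemma measurable_posPowLog (q : ℕ) (κ : ℝ) : Measurable (posPowLog q κ) := by
  have hposPow : Measurable (posPow · κ) := by
    rw [posPow_eq_indicator]
    exact (measurable_id.pow_const κ).indicator measurableSet_Ioi
  exact hposPow.mul (Real.measurable_log.pow_const q)

lemma locallyIntegrable_posPowLog (q : ℕ) (hκ : -1 < κ) : LocallyIntegrable (posPowLog q κ) := by
  obtain ⟨ε, hε, hκε⟩ : ∃ ε > 0, -1 < κ - ε := ⟨(κ + 1) / 2, by linarith, by linarith⟩
  have hdom : LocallyIntegrable fun u =>
      (q ! / ε ^ q : ℝ) • (posPow u (κ + ε) + posPow u (κ - ε)) :=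
    ((locallyIntegrable_posPow (κ := κ + ε) (by linarith)).add
      (locallyIntegrable_posPow hκε)).smul (q ! / ε ^ q : ℝ)
  refine hdom.mono (measurable_posPowLog q κ).aestronglyMeasurable (ae_of_all _ fun u => ?_)
  refine le_trans ?_ (le_abs_self _)
  rcases le_or_gt u 0 with hu | hu
  · simp [posPowLog_of_nonpos hu, posPow, hu.not_gt]
  rw [posPowLog_of_pos hu, norm_mul, norm_pow, Real.norm_eq_abs, Real.norm_eq_abs,
    abs_of_pos (by positivity)]
  calc u ^ κ * |Real.log u| ^ q ≤ u ^ κ * (q ! / ε ^ q * (u ^ ε + u ^ (-ε))) := by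
        gcongr
        exact abs_log_pow_le hε hu q
    _ = (q ! / ε ^ q : ℝ) • (posPow u (κ + ε) + posPow u (κ - ε)) := by
        simp only [posPow, if_pos hu, smul_eq_mul, Real.rpow_add hu, sub_eq_add_neg]
        ring

lemma abs_posPowLog_le_add {a b : ℝ} (hκ : κ ∈ Icc a b) :
    |posPowLog q κ u| ≤ |posPowLog q a u| + |posPowLog q b u| := by
  rcases le_or_gt u 0 with hu | hu
  · simp [posPowLog_of_nonpos hu]
  have hrpow : u ^ κ ≤ u ^ a + u ^ b := by
    have ha : 0 < u ^ a := by positivity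
    have hb : 0 < u ^ b := by positivity
    rcases le_total u 1 with hu1 | hu1
    · linarith [Real.rpow_le_rpow_of_exponent_ge hu hu1 hκ.1]
    · linarith [Real.rpow_le_rpow_of_exponent_le hu1 hκ.2]
  simp only [posPowLog_of_pos hu, abs_mul, abs_of_pos (Real.rpow_pos_of_pos hu _), ← add_mul]
  gcongr

end Kernel

section Integral

/-- The integral of `g` against the kernel `(x - s)_+^κ log^q (x - s)`; with `κ = v - 1/α` and
`g` the `p`-th derivative of `ψ` it is `∂ₓ^p ∂ᵥ^q Ψ(x, v)`. -/
noncomputable def logFracIntegral (q : ℕ) (κ : ℝ) (g : ℝ → ℝ) (x : ℝ) : ℝ :=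
  ∫ s, posPowLog q κ (x - s) * g s

variable {g : ℝ → ℝ} {κ : ℝ}

lemma logFracIntegral_eq_convolution (q : ℕ) (κ : ℝ) (g : ℝ → ℝ) :
    logFracIntegral q κ g = posPowLog q κ ⋆[mul ℝ ℝ] g :=
  funext fun _ => convolution_mul_swap.symm

lemma convolutionExists_posPowLog (hg : Continuous g) (hs : HasCompactSupport g) (q : ℕ)
    (hκ : -1 < κ) : ConvolutionExists (posPowLog q κ) g (mul ℝ ℝ) :=
  hs.convolutionExists_right _ (locallyIntegrable_posPowLog q hκ) hg

lemma hasDerivAt_logFracIntegral (hg : ContDiff ℝ 1 g) (hs : HasCompactSupport g) (q : ℕ)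
    (hκ : -1 < κ) (x : ℝ) :
    HasDerivAt (logFracIntegral q κ g) (logFracIntegral q κ (deriv g) x) x := by
  simp only [logFracIntegral_eq_convolution]
  exact hs.hasDerivAt_convolution_right _ (locallyIntegrable_posPowLog q hκ) hg x

lemma hasDerivAt_logFracIntegral_exponent (hg : Continuous g) (hs : HasCompactSupport g)
    (q : ℕ) (hκ : -1 < κ) (x : ℝ) :
    HasDerivAt (fun κ' => logFracIntegral q κ' g x) (logFracIntegral (q + 1) κ g x) κ := by
  obtain ⟨a, ha, haκ⟩ := exists_between hκ
  have hint : ∀ (k : ℕ) {κ' : ℝ}, -1 < κ' → Integrable fun t => posPowLog k κ' t * g (x - t) :=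
    fun k _ hκ' => convolutionExists_posPowLog hg hs k hκ' x
  simp only [logFracIntegral_eq_convolution]
  refine (hasDerivAt_integral_of_dominated_loc_of_deriv_le
    (F := fun κ t => posPowLog q κ t * g (x - t))
    (F' := fun κ t => posPowLog (q + 1) κ t * g (x - t))
    (bound := fun t => |posPowLog (q + 1) a t * g (x - t)| +
      |posPowLog (q + 1) (κ + 1) t * g (x - t)|)
    (Icc_mem_nhds haκ (lt_add_one κ)) ?_ (hint q hκ) (hint (q + 1) hκ).1
    (ae_of_all _ fun t κ' hκ' => ?_)
    ((hint (q + 1) ha).abs.add (hint (q + 1) (by linarith)).abs)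
    (ae_of_all _ fun t κ' _ => (hasDerivAt_posPowLog_exponent q κ' t).mul_const _)).2
  · filter_upwards [Ioi_mem_nhds hκ] with κ' hκ' using (hint q hκ').1
  · simp only [abs_mul, norm_mul, Real.norm_eq_abs, ← add_mul]
    gcongr
    exact abs_posPowLog_le_add hκ'

lemma continuousAt_logFracIntegral (hg : Continuous g) (hs : HasCompactSupport g) (q : ℕ)
    (hκ : -1 < κ) (x : ℝ) :
    ContinuousAt (fun z : ℝ × ℝ => logFracIntegral q z.2 g z.1) (x, κ) := by
  obtain ⟨a, ha, haκ⟩ := exists_between hκ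
  obtain ⟨M, hM⟩ := hg.bounded_above_of_compact_support hs
  let S : Set ℝ := (Metric.closedBall x 1 ×ˢ tsupport g).image fun z => z.1 - z.2
  have hS : IsCompact S := ((isCompact_closedBall x 1).prod hs).image continuous_sub
  have hint : ∀ {κ' : ℝ}, -1 < κ' → IntegrableOn (posPowLog q κ') S := fun hκ' =>
    (locallyIntegrable_posPowLog q hκ').integrableOn_isCompact hS
  simp only [logFracIntegral_eq_convolution]
  refine continuousAt_of_dominated
    (F := fun (z : ℝ × ℝ) t => posPowLog q z.2 t * g (z.1 - t))
    (bound := S.indicator fun t => (|posPowLog q a t| + |posPowLog q (κ + 1) t|) * M)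
    (.of_forall fun z => ?_) ?_ ?_ (ae_of_all _ fun t => ?_)
  · exact ((measurable_posPowLog q z.2).mul
      (hg.measurable.comp (measurable_const.sub measurable_id))).aestronglyMeasurable
  · have hnear : Metric.closedBall x 1 ×ˢ Icc a (κ + 1) ∈ 𝓝 (x, κ) :=
      prod_mem_nhds (Metric.closedBall_mem_nhds x one_pos) (Icc_mem_nhds haκ (lt_add_one κ))
    filter_upwards [hnear] with z hz
    refine ae_of_all _ fun t => ?_
    by_cases hzt : z.1 - t ∈ tsupport g
    · have htS : t ∈ S := ⟨(z.1, z.1 - t), ⟨hz.1, hzt⟩, sub_sub_cancel z.1 t⟩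
      rw [indicator_of_mem htS, norm_mul]
      exact mul_le_mul (abs_posPowLog_le_add hz.2) (hM _) (norm_nonneg _) (by positivity)
    · rw [image_eq_zero_of_notMem_tsupport hzt, mul_zero, norm_zero]
      exact indicator_nonneg (fun _ _ => mul_nonneg (by positivity)
        ((norm_nonneg _).trans (hM 0))) _
  · have hκ1 : -1 < κ + 1 := by linarith
    exact IntegrableOn.integrable_indicator
      (((hint ha).abs.add (hint hκ1).abs).mul_const M) hS.measurableSet
  · exact (((continuous_posPowLog_exponent q t).comp continuous_snd).mul
      (hg.comp (by fun_prop))).continuousAt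

lemma logFracIntegral_eq_zero {x : ℝ} (hx : ∀ s ∈ tsupport g, x ≤ s) (q : ℕ) (κ : ℝ) :
    logFracIntegral q κ g x = 0 := by
  refine integral_eq_zero_of_ae (ae_of_all _ fun s => ?_)
  by_cases hsg : s ∈ tsupport g
  · simp [posPowLog_of_nonpos (sub_nonpos.2 (hx s hsg))]
  · simp [image_eq_zero_of_notMem_tsupport hsg]

variable {N : ℕ} {a b r : ℝ}

lemma exists_rpow_mul_abs_logFracIntegral_le_of_right (hg : Continuous g)
    (hs : HasCompactSupport g) (hmom : HasVanishingMoments N g) {R : ℝ} (hR : 0 ≤ R)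
    (hsub : tsupport g ⊆ Icc (-R) R) (q : ℕ) (ha : -1 < a) (hr : 0 ≤ r) (hbr : b + r < N) :
    ∃ C, ∀ κ ∈ Icc a b, ∀ x, 2 * R + 3 ≤ x → (3 + |x|) ^ r * |logFracIntegral q κ g x| ≤ C := by
  obtain ⟨C, hC⟩ := exists_abs_iteratedDeriv_posPowLog_sub_le N q a hr hbr
  refine ⟨C * (R ^ N / N ! * ∫ s, |g s|), fun κ hκ x hx => ?_⟩
  have hkernel : ∀ s ∈ Icc (-R) R,
      |iteratedDeriv N (fun s => posPowLog q κ (x - s)) s| ≤ C / (3 + |x|) ^ r :=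
    fun s hsR => hC κ hκ x s (by linarith) (by linarith [hsR.2])
  have hsmooth : ∀ s ∈ Icc (-R) R, ContDiffAt ℝ N (fun s => posPowLog q κ (x - s)) s :=
    fun s hsR => (contDiffAt_posPowLog (by linarith [hsR.2])).comp s
      (contDiffAt_const.sub contDiffAt_id)
  have hint : Integrable fun s => posPowLog q κ (x - s) * g s := by
    simpa using (convolutionExists_posPowLog hg hs q (ha.trans_le hκ.1) x).integrable_swap
  calc (3 + |x|) ^ r * |logFracIntegral q κ g x|
      ≤ (3 + |x|) ^ r * (C / (3 + |x|) ^ r * (R ^ N / N ! * ∫ s, |g s|)) := by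
        gcongr
        exact hmom.abs_integral_mul_le hg hs hR hsub hsmooth hkernel hint
    _ = C * (R ^ N / N ! * ∫ s, |g s|) := by
        field_simp

lemma exists_rpow_mul_abs_logFracIntegral_le (hg : Continuous g) (hs : HasCompactSupport g)
    (hmom : HasVanishingMoments N g) (q : ℕ) (ha : -1 < a) (hr : 0 ≤ r) (hbr : b + r < N) :
    ∃ C, ∀ κ ∈ Icc a b, ∀ x, (3 + |x|) ^ r * |logFracIntegral q κ g x| ≤ C := by
  obtain ⟨R, hR, hsub⟩ : ∃ R, 0 ≤ R ∧ tsupport g ⊆ Icc (-R) R := by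
    obtain ⟨R, hR, hsub⟩ := hs.isCompact.isBounded.subset_closedBall_lt 0 0
    exact ⟨R, hR.le, by simpa [Real.closedBall_eq_Icc] using hsub⟩
  obtain ⟨C₁, hC₁⟩ :=
    exists_rpow_mul_abs_logFracIntegral_le_of_right hg hs hmom hR hsub q ha hr hbr
  obtain ⟨C₂, hC₂⟩ : ∃ C₂, ∀ z ∈ Icc (-R) (2 * R + 3) ×ˢ Icc a b,
      ‖(3 + |z.1|) ^ r * |logFracIntegral q z.2 g z.1|‖ ≤ C₂ := by
    refine (isCompact_Icc.prod isCompact_Icc).exists_bound_of_continuousOn fun z hz => ?_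
    have hweight : ContinuousAt (fun z : ℝ × ℝ => (3 + |z.1|) ^ r) z :=
      ContinuousAt.rpow_const (by fun_prop) (.inr hr)
    exact (hweight.mul
      (continuousAt_logFracIntegral hg hs q (ha.trans_le hz.2.1) z.1).abs).continuousWithinAt
  refine ⟨max 0 (max C₁ C₂), fun κ hκ x => ?_⟩
  rcases le_total x (-R) with hleft | hleft
  · simp [logFracIntegral_eq_zero fun _ hsg => hleft.trans (hsub hsg).1]
  rcases le_total (2 * R + 3) x with hright | hright
  · exact (hC₁ κ hκ x hright).trans (by simp)
  · exact (le_abs_self _).trans ((hC₂ (x, κ) ⟨⟨hleft, hright⟩, hκ⟩).trans (by simp))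

end Integral

theorem fracPrimitive_localization_general (θ : ℝ) {ψ : ℝ → ℝ} {n N : ℕ} (hψ : ContDiff ℝ n ψ)
    (hsupp : HasCompactSupport ψ) (hmom : HasVanishingMoments N ψ) :
    ∃ D : ℕ → ℕ → ℝ → ℝ → ℝ,
      (∀ x v : ℝ, D 0 0 x v = ∫ s : ℝ, posPow (x - s) (v - θ) * ψ s) ∧
      (∀ p q : ℕ, p < n → ∀ x : ℝ, ∀ v ∈ Ioi (θ - 1),
        HasDerivAt (fun x' => D p q x' v) (D (p + 1) q x v) x) ∧
      (∀ p q : ℕ, p ≤ n → ∀ x : ℝ, ∀ v ∈ Ioi (θ - 1),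
        HasDerivAt (fun v' => D p q x v') (D p (q + 1) x v) v) ∧
      (∀ p q : ℕ, p ≤ n →
        ContinuousOn (fun xv : ℝ × ℝ => D p q xv.1 xv.2) (univ ×ˢ Ioi (θ - 1))) ∧
      (∀ p q : ℕ, p ≤ n → ∀ A B r : ℝ, θ - 1 < A → 0 ≤ r → B - θ + r < N + p →
        ∃ c : ℝ, ∀ x : ℝ, ∀ v ∈ Icc A B, (3 + |x|) ^ r * |D p q x v| ≤ c) := by
  have hcont : ∀ {p : ℕ}, p ≤ n → Continuous (iteratedDeriv p ψ) := fun {p} hp =>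
    hψ.continuous_iteratedDeriv p (mod_cast hp)
  have hsuppDeriv : ∀ p, HasCompactSupport (iteratedDeriv p ψ) :=
    hasCompactSupport_iteratedDeriv hsupp
  have hexponent : ∀ {v : ℝ}, θ - 1 < v → -1 < v - θ := fun hv => by linarith
  refine ⟨fun p q x v => logFracIntegral q (v - θ) (iteratedDeriv p ψ) x,
    fun x v => by simp [logFracIntegral, posPowLog],
    fun p q hp x v hv => ?_, fun p q hp x v hv => ?_, fun p q hp z hz => ?_,
    fun p q hp A B r hA hr hB => ?_⟩
  · simp only [iteratedDeriv_succ]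
    exact hasDerivAt_logFracIntegral (contDiff_one_iteratedDeriv hψ hp) (hsuppDeriv p) q
      (hexponent hv) x
  · exact (hasDerivAt_logFracIntegral_exponent (hcont hp) (hsuppDeriv p) q
      (hexponent hv) x).comp_sub_const v θ
  · exact ((continuousAt_logFracIntegral (hcont hp) (hsuppDeriv p) q
      (hexponent hz.2) z.1).comp (f := fun z : ℝ × ℝ => (z.1, z.2 - θ))
      (by fun_prop)).continuousWithinAt
  · obtain ⟨c, hc⟩ := exists_rpow_mul_abs_logFracIntegral_le (hcont hp)
      (hsuppDeriv p) (hasVanishingMoments_iteratedDeriv hmom hψ hsupp hp) q (hexponent hA) hr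
      (b := B - θ) (by push_cast; linarith)
    exact ⟨c, fun x v hv => hc _ ⟨by linarith [hv.1], by linarith [hv.2]⟩ x⟩

/-- Localization lemma for the fractional primitive `Ψ` of a `C³` compactly supported
wavelet `ψ` with vanishing moments of order `≤ 3`: there is a family `D p q` of functions
with `D 0 0 = Ψ`, realizing the mixed partial derivatives `∂ₓ^p ∂_v^q Ψ` for
`p ∈ {0,1,2,3}` and all `q ∈ ℕ`, each continuous on `ℝ × (1/α, 1)` and well-localized in
`x` uniformly in `v` on every compact subinterval `[A,B] ⊂ (1/α, 1)`. -/
theorem fracPrimitive_localization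
    (α : ℝ) (hα₁ : 1 < α) (hα₂ : α < 2)
    (ψ : ℝ → ℝ) (hψ : ContDiff ℝ 3 ψ) (hsupp : HasCompactSupport ψ)
    (hmom : ∀ m : ℕ, m ≤ 3 → (∫ s : ℝ, s ^ m * ψ s) = 0) :
    ∃ D : ℕ → ℕ → ℝ → ℝ → ℝ,
      (∀ x v : ℝ, D 0 0 x v = fracPrimitive α ψ x v) ∧
      (∀ p q : ℕ, p < 3 → ∀ x : ℝ, ∀ v ∈ Ioo (1 / α) 1,
        HasDerivAt (fun x' => D p q x' v) (D (p + 1) q x v) x) ∧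
      (∀ p q : ℕ, p ≤ 3 → ∀ x : ℝ, ∀ v ∈ Ioo (1 / α) 1,
        HasDerivAt (fun v' => D p q x v') (D p (q + 1) x v) v) ∧
      (∀ p q : ℕ, p ≤ 3 →
        ContinuousOn (fun xv : ℝ × ℝ => D p q xv.1 xv.2) (univ ×ˢ Ioo (1 / α) 1)) ∧
      (∀ p q : ℕ, p ≤ 3 → ∀ A B : ℝ, 1 / α < A → A < B → B < 1 →
        ∃ c : ℝ, ∀ x : ℝ, ∀ v ∈ Icc A B, (3 + |x|) ^ 2 * |D p q x v| ≤ c) := by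
  obtain ⟨D, hD, hDx, hDv, hDcont, hDbound⟩ := fracPrimitive_localization_general (1 / α) (N := 4)
    hψ hsupp fun m hm => hmom m (by lia)
  have hsub : Ioo (1 / α) 1 ⊆ Ioi (1 / α - 1) := fun v hv => (sub_one_lt _).trans hv.1
  refine ⟨D, hD, fun p q hp x v hv => hDx p q hp x v (hsub hv),
    fun p q hp x v hv => hDv p q hp x v (hsub hv),
    fun p q hp => (hDcont p q hp).mono (prod_mono_right hsub), fun p q hp A B hA _ hB => ?_⟩
  have hα : 0 < 1 / α := by positivity
  simpa only [Real.rpow_two] using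
    hDbound p q hp A B 2 (by linarith) zero_le_two (by push_cast; linarith)
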